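/- Let X be a symmetric solution of CGCARE(Σ), and for s ∈ ℂ with s I_n − A invertible set T_X(s) = I_m + R† S_Xᵀ (s I_n − A)⁻¹ B. Then for every s ∈ ℂ such that both s I_n − A and −s I_n − Aᵀ are invertible, the Popov function satisfies Φ(s) = Bᵀ(−s I_n − Aᵀ)⁻¹ Q (s I_n − A)⁻¹ B + Bᵀ(−s I_n − Aᵀ)⁻¹ S + Sᵀ (s I_n − A)⁻¹ B + R = T_X(−s)ᵀ R T_X(s). -/

import Mathlib

/-!
Replacing `(Q, S)` by `(Q + XA + AᵀX, S + XB)` does not change the Popov function when `X` is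
symmetric, because `XA + AᵀX = -(X(sI - A) + (-sI - Aᵀ)X)` cancels against one resolvent at a time.
The Riccati equation turns the new `Q` into `K R⁻ Kᵀ` with `K = S + XB`, and completing the square
then factors the Popov function as soon as `K (R⁻)ᵀ R = K`. The kernel condition gives this last
identity for every `R⁻` with `R R⁻ R = R`, since the columns of `1 - (R⁻)ᵀ R` lie in the kernel of
the symmetric matrix `R`.
-/

open Matrix

/-- Entrywise embedding of a real matrix into the complex matrices. -/
def cm {α β : Type*} (M : Matrix α β ℝ) : Matrix α β ℂ := M.map Complex.ofReal

section GeneralizedInverse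

variable {α m n p : Type*} [Fintype m] [Fintype p]

theorem mul_mul_eq_self_of_mulVec_eq_zero_imp [Ring α] {R : Matrix p m α} {P : Matrix m p α}
    {K : Matrix n m α} (hR : R * P * R = R) (hker : ∀ v, R *ᵥ v = 0 → K *ᵥ v = 0) :
    K * P * R = K := by
  refine ext_iff_mulVec.mpr fun v => ?_
  have hv : R *ᵥ (v - (P * R) *ᵥ v) = 0 := by
    rw [mulVec_sub, mulVec_mulVec, ← Matrix.mul_assoc, hR, sub_self]
  have hKv := hker _ hv
  rw [mulVec_sub, mulVec_mulVec, ← Matrix.mul_assoc, sub_eq_zero] at hKv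
  exact hKv.symm

theorem mul_transpose_mul_eq_self_of_isSymm [CommSemiring α] {R P : Matrix m m α}
    (hR : R.IsSymm) (hP : R * P * R = R) : R * Pᵀ * R = R := by
  simpa only [transpose_mul, hR.eq, Matrix.mul_assoc] using congrArg transpose hP

end GeneralizedInverse

theorem one_add_mul_mul_mul_one_add_mul {α : Type*} [Semiring α] {p r q u v : α}
    (hu : u * p * r = u) (hv : r * q * v = v) :
    (1 + u * p) * r * (1 + q * v) = u * q * v + u + v + r := by
  have hleft : (1 + u * p) * r = r + u := by rw [add_mul, one_mul, hu]
  rw [hleft, mul_add, mul_one, add_mul, ← mul_assoc, ← mul_assoc, hv]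
  abel

section PopovFunction

variable {α m n : Type*} [CommRing α] [Fintype n] [DecidableEq n]

/-- The Popov function `Φ(s)` of the system `(A, B)` with weights `Q`, `S`, `R`; it is meaningful
only where both resolvents exist, the matrix inverse being `0` elsewhere. -/
noncomputable def popovFunction (A : Matrix n n α) (B : Matrix n m α) (Q : Matrix n n α)
    (S : Matrix n m α) (R : Matrix m m α) (s : α) : Matrix m m α :=
  Bᵀ * ((-s) • (1 : Matrix n n α) - Aᵀ)⁻¹ * Q * (s • (1 : Matrix n n α) - A)⁻¹ * B
    + Bᵀ * ((-s) • (1 : Matrix n n α) - Aᵀ)⁻¹ * S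
    + Sᵀ * (s • (1 : Matrix n n α) - A)⁻¹ * B
    + R

/-- The spectral factor `T(s) = I + P Kᵀ (sI - A)⁻¹ B`; the paper's `T_X` is the case
`K = S + XB`, `P = R†`. It is meaningful only where `sI - A` is invertible. -/
noncomputable def popovFactor [Fintype m] [DecidableEq m] (A : Matrix n n α) (B K : Matrix n m α)
    (P : Matrix m m α) (s : α) : Matrix m m α :=
  1 + P * Kᵀ * (s • (1 : Matrix n n α) - A)⁻¹ * B

theorem isUnit_det_smul_one_sub_transpose {A : Matrix n n α} {s : α} :
    IsUnit (s • (1 : Matrix n n α) - Aᵀ).det ↔ IsUnit (s • (1 : Matrix n n α) - A).det := by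
  rw [← det_transpose, transpose_sub, transpose_smul, transpose_one, transpose_transpose]

theorem inv_mul_sylvester_mul_inv {A : Matrix n n α} {s : α}
    (hA : IsUnit (s • (1 : Matrix n n α) - A).det)
    (hAt : IsUnit ((-s) • (1 : Matrix n n α) - Aᵀ).det) (X : Matrix n n α) :
    ((-s) • (1 : Matrix n n α) - Aᵀ)⁻¹ * (X * A + Aᵀ * X) * (s • (1 : Matrix n n α) - A)⁻¹
      = -(((-s) • (1 : Matrix n n α) - Aᵀ)⁻¹ * X) - X * (s • (1 : Matrix n n α) - A)⁻¹ := by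
  have hsylvester : X * A + Aᵀ * X
      = -(X * (s • (1 : Matrix n n α) - A)) - ((-s) • (1 : Matrix n n α) - Aᵀ) * X := by
    rw [Matrix.mul_sub, Matrix.sub_mul, Matrix.mul_smul, Matrix.smul_mul, Matrix.mul_one,
      Matrix.one_mul, neg_smul]
    abel
  rw [hsylvester, Matrix.mul_sub, Matrix.sub_mul, Matrix.mul_neg, Matrix.neg_mul,
    ← Matrix.mul_assoc, mul_nonsing_inv_cancel_right _ _ hA, nonsing_inv_mul_cancel_left _ _ hAt]

theorem popovFunction_add_sylvester {A X : Matrix n n α} {s : α} (hX : X.IsSymm)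
    (hA : IsUnit (s • (1 : Matrix n n α) - A).det)
    (hAt : IsUnit ((-s) • (1 : Matrix n n α) - Aᵀ).det)
    (B : Matrix n m α) (Q : Matrix n n α) (S : Matrix n m α) (R : Matrix m m α) :
    popovFunction A B (Q + (X * A + Aᵀ * X)) (S + X * B) R s = popovFunction A B Q S R s := by
  have hsplit : ((-s) • (1 : Matrix n n α) - Aᵀ)⁻¹ * (Q + (X * A + Aᵀ * X))
        * (s • (1 : Matrix n n α) - A)⁻¹
      = ((-s) • (1 : Matrix n n α) - Aᵀ)⁻¹ * Q * (s • (1 : Matrix n n α) - A)⁻¹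
        - ((-s) • (1 : Matrix n n α) - Aᵀ)⁻¹ * X - X * (s • (1 : Matrix n n α) - A)⁻¹ := by
    rw [Matrix.mul_add, Matrix.add_mul, inv_mul_sylvester_mul_inv hA hAt]
    abel
  have hquadratic := congrArg (fun M => Bᵀ * M * B) hsplit
  simp only [Matrix.mul_sub, Matrix.sub_mul, ← Matrix.mul_assoc] at hquadratic
  rw [popovFunction, hquadratic, transpose_add, transpose_mul, hX.eq, popovFunction]
  simp only [Matrix.mul_add, Matrix.add_mul, ← Matrix.mul_assoc]
  abel

variable [Fintype m] [DecidableEq m]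

theorem transpose_popovFactor (A : Matrix n n α) (B K : Matrix n m α) (P : Matrix m m α) (s : α) :
    (popovFactor A B K P s)ᵀ = 1 + Bᵀ * (s • (1 : Matrix n n α) - Aᵀ)⁻¹ * K * Pᵀ := by
  simp only [popovFactor, transpose_add, transpose_one, transpose_mul, transpose_nonsing_inv,
    transpose_sub, transpose_smul, transpose_transpose, Matrix.mul_assoc]

theorem popovFunction_eq_popovFactor_mul {R P : Matrix m m α} {K : Matrix n m α} (hR : R.IsSymm)
    (hK : K * Pᵀ * R = K) (A : Matrix n n α) (B : Matrix n m α) (s : α) :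
    popovFunction A B (K * P * Kᵀ) K R s
      = (popovFactor A B K P (-s))ᵀ * R * popovFactor A B K P s := by
  have hKt : R * P * Kᵀ = Kᵀ := by
    simpa only [transpose_mul, transpose_transpose, hR.eq, Matrix.mul_assoc]
      using congrArg transpose hK
  have hleft : Bᵀ * ((-s) • (1 : Matrix n n α) - Aᵀ)⁻¹ * K * Pᵀ * R
      = Bᵀ * ((-s) • (1 : Matrix n n α) - Aᵀ)⁻¹ * K := by
    rw [Matrix.mul_assoc _ Pᵀ, Matrix.mul_assoc _ K, ← Matrix.mul_assoc K, hK]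
  have hright : R * P * (Kᵀ * (s • (1 : Matrix n n α) - A)⁻¹ * B)
      = Kᵀ * (s • (1 : Matrix n n α) - A)⁻¹ * B := by
    simp only [← Matrix.mul_assoc, hKt]
  have hsquare := one_add_mul_mul_mul_one_add_mul hleft hright
  rw [transpose_popovFactor]
  simpa only [popovFunction, popovFactor, ← Matrix.mul_assoc] using hsquare.symm

theorem popovFunction_eq_popovFactor_mul_of_riccati {A Q X : Matrix n n α} {B S : Matrix n m α}
    {R P : Matrix m m α} {s : α} (hR : R.IsSymm) (hX : X.IsSymm)
    (hric : X * A + Aᵀ * X - (S + X * B) * P * (S + X * B)ᵀ + Q = 0)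
    (hK : (S + X * B) * Pᵀ * R = S + X * B)
    (hA : IsUnit (s • (1 : Matrix n n α) - A).det)
    (hAt : IsUnit ((-s) • (1 : Matrix n n α) - Aᵀ).det) :
    popovFunction A B Q S R s
      = (popovFactor A B (S + X * B) P (-s))ᵀ * R * popovFactor A B (S + X * B) P s := by
  have hQ : Q + (X * A + Aᵀ * X) = (S + X * B) * P * (S + X * B)ᵀ := by
    rw [← sub_eq_zero, ← hric]
    abel
  rw [← popovFunction_add_sylvester hX hA hAt, hQ, popovFunction_eq_popovFactor_mul hR hK]

end PopovFunction

theorem stmt_5_general {α β m n : Type*} [CommRing α] [CommRing β] [Fintype n] [DecidableEq n]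
    [Fintype m] [DecidableEq m] (f : α →+* β) {A Q X : Matrix n n α} {B S : Matrix n m α}
    {R P : Matrix m m α} (hR : R.IsSymm) (hP : R * P * R = R) (hX : X.IsSymm)
    (hric : X * A + Aᵀ * X - (S + X * B) * P * (S + X * B)ᵀ + Q = 0)
    (hker : ∀ v, R *ᵥ v = 0 → (S + X * B) *ᵥ v = 0) {s : β}
    (hA : IsUnit (s • (1 : Matrix n n β) - A.map f).det)
    (hAt : IsUnit ((-s) • (1 : Matrix n n β) - (A.map f)ᵀ).det) :
    popovFunction (A.map f) (B.map f) (Q.map f) (S.map f) (R.map f) s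
      = (popovFactor (A.map f) (B.map f) ((S + X * B).map f) (P.map f) (-s))ᵀ * R.map f
          * popovFactor (A.map f) (B.map f) ((S + X * B).map f) (P.map f) s := by
  have hK : (S + X * B) * Pᵀ * R = S + X * B :=
    mul_mul_eq_self_of_mulVec_eq_zero_imp (mul_transpose_mul_eq_self_of_isSymm hR hP) hker
  have hKf := congrArg (Matrix.map · f) hK
  have hricf := congrArg (Matrix.map · f) hric
  have hmap : (S + X * B).map f = S.map f + X.map f * B.map f := by
    rw [Matrix.map_add f (map_add f), Matrix.map_mul]
  simp only [Matrix.map_add f (map_add f), Matrix.map_sub f (map_sub f), Matrix.map_mul,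
    transpose_map, Matrix.map_zero f (map_zero f)] at hKf hricf
  rw [hmap]
  exact popovFunction_eq_popovFactor_mul_of_riccati (hR.map f) (hX.map f) hricf hKf hA hAt

theorem stmt_5 (n m : ℕ) (hn : 0 < n) (hm : 0 < m)
    (A Q : Matrix (Fin n) (Fin n) ℝ) (B S : Matrix (Fin n) (Fin m) ℝ)
    (R : Matrix (Fin m) (Fin m) ℝ)
    (hPi : (Matrix.fromBlocks Q S Sᵀ R).PosSemidef)
    (Rd : Matrix (Fin m) (Fin m) ℝ)
    (hRd1 : R * Rd * R = R) (hRd2 : Rd * R * Rd = Rd)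
    (hRd3 : (R * Rd)ᵀ = R * Rd) (hRd4 : (Rd * R)ᵀ = Rd * R)
    (X : Matrix (Fin n) (Fin n) ℝ) (hX : Xᵀ = X)
    (hgcare : X * A + Aᵀ * X - (S + X * B) * Rd * (S + X * B)ᵀ + Q = 0)
    (hker : ∀ v : Fin m → ℝ, R.mulVec v = 0 → (S + X * B).mulVec v = 0)
    (T : ℂ → Matrix (Fin m) (Fin m) ℂ)
    (hT : ∀ z : ℂ, IsUnit (z • (1 : Matrix (Fin n) (Fin n) ℂ) - cm A).det →
      T z = 1 + cm Rd * (cm (S + X * B))ᵀ *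
          (z • (1 : Matrix (Fin n) (Fin n) ℂ) - cm A)⁻¹ * cm B)
    (s : ℂ)
    (h1 : IsUnit (s • (1 : Matrix (Fin n) (Fin n) ℂ) - cm A).det)
    (h2 : IsUnit ((-s) • (1 : Matrix (Fin n) (Fin n) ℂ) - (cm A)ᵀ).det) :
    (cm B)ᵀ * ((-s) • (1 : Matrix (Fin n) (Fin n) ℂ) - (cm A)ᵀ)⁻¹ *
        cm Q * (s • (1 : Matrix (Fin n) (Fin n) ℂ) - cm A)⁻¹ * cm B
      + (cm B)ᵀ * ((-s) • (1 : Matrix (Fin n) (Fin n) ℂ) - (cm A)ᵀ)⁻¹ * cm S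
      + (cm S)ᵀ * (s • (1 : Matrix (Fin n) (Fin n) ℂ) - cm A)⁻¹ * cm B
      + cm R
    = (T (-s))ᵀ * cm R * T s := by
  have hR : R.IsSymm :=
    isHermitian_iff_isSymm.mp (isHermitian_fromBlocks_iff.mp hPi.isHermitian).2.2.2
  rw [hT s h1, hT (-s) (isUnit_det_smul_one_sub_transpose.mp h2)]
  exact stmt_5_general Complex.ofRealHom hR hRd1 hX hgcare hker h1 h2
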